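/- Let K be a field of characteristic zero, α, β ∈ K with β ≠ 0, and suppose λ, μ ∈ K are the roots of t² − αt − β. Let A = A(α,β,1) and let Ã' be the K-subalgebra of A generated by U and DU − λUD. If f and g are nonzero elements of A such that fg ∈ Ã', then f ∈ Ã' and g ∈ Ã'. -/

import Mathlib

noncomputable section

/-- Defining relations of the down-up algebra `A(α,β,γ)`:
`D = ι 0`, `U = ι 1`, relations `DU² = αUDU + βU²D + γU` and `D²U = αDUD + βUD² + γD`. -/
inductive DownUpRel (K : Type) [Field K] (a b g : K) :
    FreeAlgebra K (Fin 2) → FreeAlgebra K (Fin 2) → Prop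
  | rel1 : DownUpRel K a b g
      (FreeAlgebra.ι K (0 : Fin 2) * FreeAlgebra.ι K (1 : Fin 2) * FreeAlgebra.ι K (1 : Fin 2))
      (a • (FreeAlgebra.ι K (1 : Fin 2) * FreeAlgebra.ι K (0 : Fin 2) * FreeAlgebra.ι K (1 : Fin 2)) +
       b • (FreeAlgebra.ι K (1 : Fin 2) * FreeAlgebra.ι K (1 : Fin 2) * FreeAlgebra.ι K (0 : Fin 2)) +
       g • FreeAlgebra.ι K (1 : Fin 2))
  | rel2 : DownUpRel K a b g
      (FreeAlgebra.ι K (0 : Fin 2) * FreeAlgebra.ι K (0 : Fin 2) * FreeAlgebra.ι K (1 : Fin 2))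
      (a • (FreeAlgebra.ι K (0 : Fin 2) * FreeAlgebra.ι K (1 : Fin 2) * FreeAlgebra.ι K (0 : Fin 2)) +
       b • (FreeAlgebra.ι K (1 : Fin 2) * FreeAlgebra.ι K (0 : Fin 2) * FreeAlgebra.ι K (0 : Fin 2)) +
       g • FreeAlgebra.ι K (0 : Fin 2))

/-- The down-up algebra `A(α,β,γ)`. -/
abbrev DownUp (K : Type) [Field K] (a b g : K) := RingQuot (DownUpRel K a b g)

/-- The generator `D` of `A(α,β,γ)`. -/
def DownUp.D (K : Type) [Field K] (a b g : K) : DownUp K a b g :=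
  RingQuot.mkAlgHom K (DownUpRel K a b g) (FreeAlgebra.ι K (0 : Fin 2))

/-- The generator `U` of `A(α,β,γ)`. -/
def DownUp.U (K : Type) [Field K] (a b g : K) : DownUp K a b g :=
  RingQuot.mkAlgHom K (DownUpRel K a b g) (FreeAlgebra.ι K (1 : Fin 2))

/-! Put `w = DU - λUD`. The relations say `D p(w) = p(μw + γ) D` and `p(w) U = U p(μw + γ)`, so
`A` is an ambiskew polynomial ring over `K[w]`: every element is uniquely a sum of terms
`p(w) U ^ i D ^ k`. Order the exponents `(k, i)` lexicographically. Since `λ` and `μ` are nonzero,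
left multiplication by `p(w) ≠ 0`, `U` and `D` shifts every leading exponent by exactly `(0, 0)`,
`(0, 1)` and `(1, 0)`, so leading exponents add up in products. As `Ã'` consists of the elements in
which `D` does not occur, the claim is that two natural numbers with sum zero are both zero. -/

section LeadingExponent

variable {Γ K M : Type*} [LinearOrder Γ] [Semiring K] [AddCommMonoid M] [Module K M]

/-- The leading exponent of a finitely supported family: the largest index with a nonzero
coefficient, and `⊥` for the zero family. -/
def leadExp (x : Γ →₀ M) : WithBot Γ := x.support.max

theorem leadExp_eq_bot {x : Γ →₀ M} : leadExp x = ⊥ ↔ x = 0 := by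
  rw [leadExp, Finset.max_eq_bot, Finsupp.support_eq_empty]

theorem leadExp_single (a : Γ) {s : M} (hs : s ≠ 0) : leadExp (Finsupp.single a s) = a := by
  rw [leadExp, Finsupp.support_single a hs, Finset.max_singleton]

theorem leadExp_lt_coe {x : Γ →₀ M} {a : Γ} (h : ∀ b ∈ x.support, b < a) : leadExp x < a :=
  (Finset.sup_lt_iff (WithBot.bot_lt_coe a)).2 fun b hb ↦ WithBot.coe_lt_coe.2 (h b hb)

theorem apply_ne_zero_of_leadExp_eq {x : Γ →₀ M} {a : Γ} (h : leadExp x = a) : x a ≠ 0 :=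
  Finsupp.mem_support_iff.1 (Finset.mem_of_max h)

theorem le_of_leadExp_eq {x : Γ →₀ M} {a b : Γ} (h : leadExp x = a) (hb : x b ≠ 0) : b ≤ a :=
  Finset.le_max_of_eq (Finsupp.mem_support_iff.2 hb) h

theorem leadExp_add_of_lt {x y : Γ →₀ M} (h : leadExp y < leadExp x) :
    leadExp (x + y) = leadExp x := by
  classical
  obtain ⟨a, ha⟩ := WithBot.ne_bot_iff_exists.1 (bot_le.trans_lt h).ne'
  have hya : y a = 0 := Finsupp.notMem_support_iff.1 (Finset.notMem_of_max_lt_coe (ha ▸ h))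
  have hxa : x a ≠ 0 := apply_ne_zero_of_leadExp_eq ha.symm
  apply le_antisymm
  · calc leadExp (x + y) ≤ (x.support ∪ y.support).max := Finset.max_mono Finsupp.support_add
      _ = leadExp x ⊔ leadExp y := Finset.max_union
      _ = leadExp x := sup_eq_left.2 h.le
  · rw [← ha]
    exact Finset.le_max (by simpa [hya] using hxa)

variable [AddCommMonoid Γ]

/-- The endomorphism `T` moves leading exponents by exactly `a`. Since `⊥` is absorbing, the
zero endomorphism shifts by `⊥`, and no other endomorphism does. -/
def ShiftsLeadExp (T : Module.End K (Γ →₀ M)) (a : WithBot Γ) : Prop :=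
  ∀ x, leadExp (T x) = a + leadExp x

namespace ShiftsLeadExp

variable {T T' : Module.End K (Γ →₀ M)} {a a' : WithBot Γ}

theorem zero : ShiftsLeadExp (0 : Module.End K (Γ →₀ M)) ⊥ := fun x ↦ by
  rw [LinearMap.zero_apply, WithBot.bot_add, leadExp_eq_bot]

theorem mul (h : ShiftsLeadExp T a) (h' : ShiftsLeadExp T' a') :
    ShiftsLeadExp (T * T') (a + a') := fun x ↦ by
  rw [Module.End.mul_apply, h, h', add_assoc]

theorem pow (h : ShiftsLeadExp T a) (n : ℕ) : ShiftsLeadExp (T ^ n) (n • a) := by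
  induction n with
  | zero => exact fun x ↦ by rw [pow_zero, Module.End.one_apply, zero_nsmul, zero_add]
  | succ n ih => rw [pow_succ, succ_nsmul]; exact ih.mul h

variable [IsOrderedCancelAddMonoid Γ]

theorem add_of_lt (h : ShiftsLeadExp T a) (h' : ShiftsLeadExp T' a') (ha : a' < a) :
    ShiftsLeadExp (T + T') a := fun x ↦ by
  rw [LinearMap.add_apply]
  obtain rfl | hx := eq_or_ne x 0
  · rw [map_zero, map_zero, add_zero, leadExp_eq_bot.2 rfl, WithBot.add_bot]
  · rw [leadExp_add_of_lt, h]
    rw [h, h']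
    exact WithBot.add_lt_add_right (leadExp_eq_bot.not.2 hx) ha

theorem of_single {a : Γ}
    (h : ∀ b s, s ≠ 0 → leadExp (T (Finsupp.single b s)) = (a + b : Γ)) :
    ShiftsLeadExp T a := fun x ↦ by
  induction x using Finsupp.induction_on_max with
  | zero => rw [map_zero, leadExp_eq_bot.2 rfl, WithBot.add_bot]
  | single_add b s x hb hs ih =>
    have hx : leadExp x < leadExp (Finsupp.single b s) := by
      rw [leadExp_single b hs]
      exact leadExp_lt_coe hb
    have hTx : leadExp (T x) < leadExp (T (Finsupp.single b s)) := by
      rw [ih, h b s hs, WithBot.coe_add, ← leadExp_single b hs]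
      exact WithBot.add_lt_add_left WithBot.coe_ne_bot hx
    rw [map_add, leadExp_add_of_lt hTx, leadExp_add_of_lt hx, h b s hs, leadExp_single b hs,
      WithBot.coe_add]

end ShiftsLeadExp

end LeadingExponent

section Ambiskew

variable {K S R : Type*} [CommSemiring K] [CommSemiring S] [Algebra K S] [Semiring R] [Algebra K R]

/-- The elements `d`, `u` and the image of `S` satisfy the defining relations of the ambiskew
polynomial ring over `S` with automorphism `τ`, scalar `l` and element `w`. -/
structure AmbiskewRel (τ : S ≃ₐ[K] S) (w : S) (l : K) (φ : S →ₐ[K] R) (d u : R) : Prop where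
  d_mul (s : S) : d * φ s = φ (τ s) * d
  u_mul (s : S) : u * φ (τ s) = φ s * u
  d_mul_u : d * u = l • (u * d) + φ w

/-- The coefficients in `d * u ^ i = l ^ i • (u ^ i * d) + φ cᵢ * u ^ (i - 1)`. -/
def commCoeff (τ : S ≃ₐ[K] S) (w : S) (l : K) : ℕ → S
  | 0 => 0
  | i + 1 => l • τ.symm (commCoeff τ w l i) + w

/-- The free `S`-module on the normal monomials `u ^ i * d ^ k`, which is the ambiskew polynomial
ring as a left module over itself. The exponent of `d` comes first, so that it dominates in the
lexicographic order. -/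
abbrev NormalForm (S : Type*) [Zero S] := (ℕ ×ₗ ℕ) →₀ S

namespace NormalForm

variable (τ : S ≃ₐ[K] S) (w : S) (l : K)

/-- Left multiplication by `u` on normal forms. -/
def mulU : Module.End K (NormalForm S) :=
  Finsupp.lsum K fun a ↦
    Finsupp.lsingle (toLex ((ofLex a).1, (ofLex a).2 + 1)) ∘ₗ τ.symm.toLinearMap

/-- Left multiplication by `d` on normal forms. -/
def mulD : Module.End K (NormalForm S) :=
  Finsupp.lsum K fun a ↦
    Finsupp.lsingle (toLex ((ofLex a).1 + 1, (ofLex a).2)) ∘ₗ (l ^ (ofLex a).2 • τ.toLinearMap) +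
    Finsupp.lsingle (toLex ((ofLex a).1, (ofLex a).2 - 1)) ∘ₗ
      LinearMap.mulRight K (commCoeff τ w l (ofLex a).2) ∘ₗ τ.toLinearMap

theorem lsmul_single (k i : ℕ) (s t : S) :
    Algebra.lsmul K K (NormalForm S) s (Finsupp.single (toLex (k, i)) t) =
      Finsupp.single (toLex (k, i)) (s * t) :=
  Finsupp.smul_single ..

theorem mulU_single (k i : ℕ) (s : S) :
    mulU τ (Finsupp.single (toLex (k, i)) s) = Finsupp.single (toLex (k, i + 1)) (τ.symm s) := by
  simp [mulU]

theorem mulD_single (k i : ℕ) (s : S) :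
    mulD τ w l (Finsupp.single (toLex (k, i)) s) =
      Finsupp.single (toLex (k + 1, i)) (l ^ i • τ s) +
        Finsupp.single (toLex (k, i - 1)) (τ s * commCoeff τ w l i) := by
  simp [mulD]

theorem hom_ext {P : Type*} [AddCommMonoid P] [Module K P] {T T' : NormalForm S →ₗ[K] P}
    (h : ∀ k i s, T (Finsupp.single (toLex (k, i)) s) = T' (Finsupp.single (toLex (k, i)) s)) :
    T = T' :=
  Finsupp.lhom_ext fun a s ↦ h (ofLex a).1 (ofLex a).2 s

theorem ambiskewRel :
    AmbiskewRel τ w l (Algebra.lsmul K K (NormalForm S)) (mulD τ w l) (mulU τ) where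
  d_mul s := hom_ext fun k i t ↦ by
    simp only [Module.End.mul_apply, lsmul_single, mulD_single, map_add, map_mul, mul_smul_comm,
      mul_assoc]
  u_mul s := hom_ext fun k i t ↦ by
    simp only [Module.End.mul_apply, lsmul_single, mulU_single, map_mul, AlgEquiv.symm_apply_apply]
  d_mul_u := hom_ext fun k i s ↦ by
    have hlead : l • Finsupp.single (toLex (k + 1, i + 1)) (l ^ i • s) =
        Finsupp.single (toLex (k + 1, i + 1)) (l ^ (i + 1) • s) := by
      rw [Finsupp.smul_single, smul_smul, pow_succ']
    have htail : l • Finsupp.single (toLex (k, i - 1 + 1)) (s * τ.symm (commCoeff τ w l i)) +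
        Finsupp.single (toLex (k, i)) (w * s) =
        Finsupp.single (toLex (k, i)) (s * commCoeff τ w l (i + 1)) := by
      cases i with
      | zero => simp [commCoeff, mul_comm]
      | succ i =>
        rw [Nat.add_sub_cancel, Finsupp.smul_single, ← Finsupp.single_add,
          commCoeff.eq_2 _ _ _ (i + 1), mul_add, mul_smul_comm, mul_comm w]
    simp only [Module.End.mul_apply, LinearMap.add_apply, LinearMap.smul_apply, lsmul_single,
      mulU_single, mulD_single, map_add, map_mul, map_smul, AlgEquiv.apply_symm_apply,
      AlgEquiv.symm_apply_apply, smul_add, hlead, add_assoc, htail, Nat.add_sub_cancel]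

theorem shiftsLeadExp_lsmul [NoZeroDivisors S] {s : S} (hs : s ≠ 0) :
    ShiftsLeadExp (Algebra.lsmul K K (NormalForm S) s) ((0 : ℕ ×ₗ ℕ) : WithBot (ℕ ×ₗ ℕ)) :=
  .of_single fun a t ht ↦ by
    rw [zero_add, ← leadExp_single a (mul_ne_zero hs ht)]
    exact congrArg leadExp (lsmul_single _ _ _ _)

theorem shiftsLeadExp_mulU : ShiftsLeadExp (mulU τ) ↑(toLex (0, 1) : ℕ ×ₗ ℕ) :=
  .of_single fun a s hs ↦ by
    obtain ⟨⟨k, i⟩, rfl⟩ := toLex.surjective a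
    have hs' : τ.symm s ≠ 0 := (map_ne_zero_iff _ τ.symm.injective).2 hs
    rw [mulU_single, leadExp_single _ hs', ← toLex_add, Prod.mk_add_mk, zero_add, add_comm 1]

theorem shiftsLeadExp_mulD {l : K} (hl : IsSMulRegular S l) :
    ShiftsLeadExp (mulD τ w l) ↑(toLex (1, 0) : ℕ ×ₗ ℕ) :=
  .of_single fun a s hs ↦ by
    obtain ⟨⟨k, i⟩, rfl⟩ := toLex.surjective a
    have hs' : l ^ i • τ s ≠ 0 := fun h ↦
      hs ((map_eq_zero_iff _ τ.injective).1 ((hl.pow i).right_eq_zero_of_smul h))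
    have hlow : leadExp (Finsupp.single (toLex (k, i - 1)) (τ s * commCoeff τ w l i)) <
        leadExp (Finsupp.single (toLex (k + 1, i)) (l ^ i • τ s)) := by
      rw [leadExp_single _ hs']
      refine leadExp_lt_coe fun b hb ↦ ?_
      obtain rfl := Finset.mem_singleton.1 (Finsupp.support_single_subset hb)
      exact Prod.Lex.toLex_lt_toLex.2 (.inl k.lt_succ_self)
    rw [mulD_single, leadExp_add_of_lt hlow, leadExp_single _ hs', ← toLex_add, Prod.mk_add_mk,
      zero_add, add_comm 1]

end NormalForm

namespace AmbiskewRel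

variable {τ : S ≃ₐ[K] S} {w : S} {l : K} {φ : S →ₐ[K] R} {d u : R}

theorem u_mul_symm (h : AmbiskewRel τ w l φ d u) (s : S) : u * φ s = φ (τ.symm s) * u := by
  rw [← h.u_mul, τ.apply_symm_apply]

theorem d_mul_u_pow (h : AmbiskewRel τ w l φ d u) (i : ℕ) :
    d * u ^ i = l ^ i • (u ^ i * d) + φ (commCoeff τ w l i) * u ^ (i - 1) := by
  induction i with
  | zero => simp [commCoeff]
  | succ i ih =>
    have hcoeff : u * (φ (commCoeff τ w l i) * u ^ (i - 1)) =
        φ (τ.symm (commCoeff τ w l i)) * u ^ i := by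
      cases i with
      | zero => simp [commCoeff]
      | succ i => rw [← mul_assoc, h.u_mul_symm, mul_assoc, Nat.add_sub_cancel, pow_succ' u i]
    calc d * u ^ (i + 1) = l • (u * (d * u ^ i)) + φ w * u ^ i := by
          rw [pow_succ', ← mul_assoc, h.d_mul_u, add_mul, smul_mul_assoc, mul_assoc]
      _ = l ^ (i + 1) • (u ^ (i + 1) * d) +
            (l • (φ (τ.symm (commCoeff τ w l i)) * u ^ i) + φ w * u ^ i) := by
          rw [ih, mul_add, hcoeff, smul_add, mul_smul_comm, smul_smul, ← pow_succ', ← mul_assoc,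
            ← pow_succ', add_assoc]
      _ = _ := by
          rw [commCoeff, map_add, map_smul, add_mul, smul_mul_assoc, Nat.add_sub_cancel]

end AmbiskewRel

namespace NormalForm

/-- The element of `R` with the given normal form: a basis vector `s` at `(k, i)` is sent to
`φ s * u ^ i * d ^ k`. -/
def eval (φ : S →ₐ[K] R) (d u : R) : NormalForm S →ₗ[K] R :=
  Finsupp.lsum K fun a ↦
    LinearMap.mulRight K (u ^ (ofLex a).2 * d ^ (ofLex a).1) ∘ₗ φ.toLinearMap

theorem eval_single (φ : S →ₐ[K] R) (d u : R) (k i : ℕ) (s : S) :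
    eval φ d u (Finsupp.single (toLex (k, i)) s) = φ s * u ^ i * d ^ k := by
  simp [eval, mul_assoc]

theorem map_eval {R' : Type*} [Semiring R'] [Algebra K R'] (f : R →ₐ[K] R') (φ : S →ₐ[K] R)
    (d u : R) (x : NormalForm S) : f (eval φ d u x) = eval (f.comp φ) (f d) (f u) x := by
  suffices f.toLinearMap ∘ₗ eval φ d u = eval (f.comp φ) (f d) (f u) from LinearMap.congr_fun this x
  exact hom_ext fun k i s ↦ by simp [eval_single]

variable {τ : S ≃ₐ[K] S} {w : S} {l : K} {φ : S →ₐ[K] R} {d u : R}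

theorem eval_comp_mulU (h : AmbiskewRel τ w l φ d u) :
    eval φ d u ∘ₗ mulU τ = LinearMap.mulLeft K u ∘ₗ eval φ d u :=
  hom_ext fun k i s ↦ by
    simp only [LinearMap.comp_apply, LinearMap.mulLeft_apply, mulU_single, eval_single,
      ← mul_assoc, h.u_mul_symm]
    rw [pow_succ', ← mul_assoc]

theorem eval_comp_mulD (h : AmbiskewRel τ w l φ d u) :
    eval φ d u ∘ₗ mulD τ w l = LinearMap.mulLeft K d ∘ₗ eval φ d u :=
  hom_ext fun k i s ↦ by
    simp only [LinearMap.comp_apply, LinearMap.mulLeft_apply, mulD_single, map_add, eval_single]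
    symm
    calc d * (φ s * u ^ i * d ^ k) = φ (τ s) * (d * u ^ i) * d ^ k := by
          rw [← mul_assoc, ← mul_assoc, h.d_mul, mul_assoc (φ _)]
      _ = _ := by
        rw [h.d_mul_u_pow, map_smul, map_mul, pow_succ']
        simp only [mul_add, add_mul, mul_assoc, smul_mul_assoc, mul_smul_comm]

theorem shiftsLeadExp_eval [NoZeroDivisors S] (hl : IsSMulRegular S l) (x : NormalForm S) :
    ShiftsLeadExp (eval (Algebra.lsmul K K (NormalForm S)) (mulD τ w l) (mulU τ) x)
      (leadExp x) := by
  induction x using Finsupp.induction_on_max with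
  | zero => rw [map_zero, leadExp_eq_bot.2 rfl]; exact .zero
  | single_add a s x ha hs ih =>
    have hx : leadExp x < leadExp (Finsupp.single a s) := by
      rw [leadExp_single a hs]
      exact leadExp_lt_coe ha
    rw [map_add, leadExp_add_of_lt hx]
    refine .add_of_lt ?_ ih hx
    obtain ⟨⟨k, i⟩, rfl⟩ := toLex.surjective a
    rw [eval_single, leadExp_single _ hs]
    have hexp : (↑(toLex (k, i) : ℕ ×ₗ ℕ) : WithBot (ℕ ×ₗ ℕ)) =
        ↑(0 : ℕ ×ₗ ℕ) + i • ↑(toLex (0, 1) : ℕ ×ₗ ℕ) + k • ↑(toLex (1, 0) : ℕ ×ₗ ℕ) := by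
      rw [← WithBot.coe_nsmul, ← WithBot.coe_nsmul, ← WithBot.coe_add, ← WithBot.coe_add, zero_add]
      exact congrArg (fun a ↦ ((toLex a : ℕ ×ₗ ℕ) : WithBot (ℕ ×ₗ ℕ)))
        (show (k, i) = i • (0, 1) + k • (1, 0) by simp)
    rw [hexp]
    exact ((shiftsLeadExp_lsmul hs).mul ((shiftsLeadExp_mulU τ).pow i)).mul
      ((shiftsLeadExp_mulD τ w hl).pow k)

/-- The normal forms in which `d` does not occur. -/
def dFree (K S : Type*) [CommSemiring K] [CommSemiring S] [Algebra K S] :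
    Submodule K (NormalForm S) :=
  Finsupp.supported S K {a | (ofLex a).1 = 0}

theorem mem_dFree {x : NormalForm S} : x ∈ dFree K S ↔ ∀ a, x a ≠ 0 → (ofLex a).1 = 0 := by
  simp [dFree, Finsupp.mem_supported, Set.subset_def]

theorem single_mem_dFree (i : ℕ) (s : S) : Finsupp.single (toLex (0, i)) s ∈ dFree K S :=
  Finsupp.single_mem_supported K s rfl

theorem dFree_le {V : Submodule K (NormalForm S)}
    (h : ∀ i s, Finsupp.single (toLex (0, i)) s ∈ V) : dFree K S ≤ V := fun x hx ↦ by
  rw [← Finsupp.sum_single x]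
  refine sum_mem fun a ha ↦ ?_
  obtain ⟨⟨k, i⟩, rfl⟩ := toLex.surjective a
  obtain rfl : k = 0 := mem_dFree.1 hx _ (Finsupp.mem_support_iff.1 ha)
  exact h i _

theorem mem_dFree_iff_of_leadExp_eq {x : NormalForm S} {a : ℕ ×ₗ ℕ} (ha : leadExp x = a) :
    x ∈ dFree K S ↔ (ofLex a).1 = 0 := by
  refine ⟨fun h ↦ mem_dFree.1 h a (apply_ne_zero_of_leadExp_eq ha), fun h ↦ mem_dFree.2 ?_⟩
  intro b hb
  exact Nat.le_zero.1 (h ▸ Prod.Lex.monotone_fst _ _ (le_of_leadExp_eq ha hb))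

theorem dFree_le_comap_lsmul (s : S) :
    dFree K S ≤ (dFree K S).comap (Algebra.lsmul K K (NormalForm S) s) :=
  dFree_le fun i t ↦ by
    rw [Submodule.mem_comap, lsmul_single]
    exact single_mem_dFree i _

theorem dFree_le_comap_mulU (τ : S ≃ₐ[K] S) : dFree K S ≤ (dFree K S).comap (mulU τ) :=
  dFree_le fun i s ↦ by
    rw [Submodule.mem_comap, mulU_single]
    exact single_mem_dFree (i + 1) _

theorem dFree_le_comap_eval {B : Subalgebra K R} (hφ : ∀ s, φ s ∈ B) (hu : u ∈ B) :
    dFree K S ≤ B.toSubmodule.comap (eval φ d u) :=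
  dFree_le fun i s ↦ by
    rw [Submodule.mem_comap, eval_single, pow_zero, mul_one]
    exact B.mul_mem (hφ s) (pow_mem hu i)

end NormalForm

end Ambiskew

section DownUpPair

open Polynomial

section Semiring

variable {K R : Type*} [CommSemiring K] [Semiring R] [Algebra K R]

/-- The elements `d` and `u` satisfy the defining relations of `A(α,β,γ)`. -/
structure IsDownUpPair (α β γ : K) (d u : R) : Prop where
  d_mul_u_mul_u : d * u * u = α • (u * d * u) + β • (u * u * d) + γ • u
  d_mul_d_mul_u : d * d * u = α • (d * u * d) + β • (u * d * d) + γ • d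

theorem semiconjBy_aeval {x a b : R} (h : SemiconjBy x a b) (p : K[X]) :
    SemiconjBy x (aeval a p) (aeval b p) := by
  have hC (c : K) : SemiconjBy x (algebraMap K R c) (algebraMap K R c) :=
    (Algebra.commutes c x).symm
  induction p using Polynomial.induction_on with
  | C c => simpa only [aeval_C] using hC c
  | add p q hp hq => simpa only [map_add] using hp.add_right hq
  | monomial n c _ =>
    simpa only [map_mul, map_pow, aeval_C, aeval_X] using (hC c).mul_right (h.pow_right (n + 1))

end Semiring

section Ring

variable {K R : Type*} [CommRing K] [Ring R] [Algebra K R]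

/-- The `l`-twisted commutator `d u - l u d`; for the generators of a down-up algebra and `l = λ`
it is the second generator of `Ã'`. -/
def twistedCommutator (l : K) (d u : R) : R := d * u - l • (u * d)

theorem isDownUpPair_iff_semiconjBy (l m γ : K) (d u : R) :
    IsDownUpPair (l + m) (-(l * m)) γ d u ↔
      SemiconjBy u (m • twistedCommutator l d u + algebraMap K R γ) (twistedCommutator l d u) ∧
      SemiconjBy d (twistedCommutator l d u) (m • twistedCommutator l d u + algebraMap K R γ) := by
  have hu : u * (m • twistedCommutator l d u + algebraMap K R γ) = twistedCommutator l d u * u ↔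
      d * u * u = (l + m) • (u * d * u) + (-(l * m)) • (u * u * d) + γ • u := by
    rw [eq_comm]
    simp only [twistedCommutator, sub_mul, mul_sub, smul_mul_assoc, mul_smul_comm, ← mul_assoc,
      add_smul, smul_sub, neg_smul, smul_smul, mul_comm m l, mul_add, ← Algebra.commutes γ u,
      ← Algebra.smul_def, sub_eq_iff_eq_add]
    abel_nf
  have hd : d * twistedCommutator l d u = (m • twistedCommutator l d u + algebraMap K R γ) * d ↔
      d * d * u = (l + m) • (d * u * d) + (-(l * m)) • (u * d * d) + γ • d := by
    simp only [twistedCommutator, sub_mul, mul_sub, smul_mul_assoc, mul_smul_comm, ← mul_assoc,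
      add_smul, smul_sub, neg_smul, smul_smul, mul_comm m l, add_mul, ← Algebra.smul_def,
      sub_eq_iff_eq_add]
    abel_nf
  exact ⟨fun h ↦ ⟨hu.2 h.1, hd.2 h.2⟩, fun h ↦ ⟨hu.1 h.1, hd.1 h.2⟩⟩

variable (l m γ : K) [Invertible m]

theorem algEquivCMulXAddC_X : algEquivCMulXAddC m γ X = m • X + algebraMap K K[X] γ := by
  rw [algEquivCMulXAddC_apply, aeval_X, smul_eq_C_mul, algebraMap_eq]

theorem aeval_algEquivCMulXAddC (w : R) (p : K[X]) :
    aeval w (algEquivCMulXAddC m γ p) = aeval (m • w + algebraMap K R γ) p := by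
  suffices (aeval w).comp (algEquivCMulXAddC m γ).toAlgHom = aeval (m • w + algebraMap K R γ) from
    AlgHom.congr_fun this p
  exact algHom_ext <| by simp [Algebra.smul_def]

variable {l m γ} {d u : R}

theorem IsDownUpPair.ambiskewRel (h : IsDownUpPair (l + m) (-(l * m)) γ d u) :
    AmbiskewRel (algEquivCMulXAddC m γ) X l (aeval (twistedCommutator l d u)) d u := by
  obtain ⟨hu, hd⟩ := (isDownUpPair_iff_semiconjBy l m γ d u).1 h
  refine ⟨fun s ↦ ?_, fun s ↦ ?_, ?_⟩
  · rw [aeval_algEquivCMulXAddC]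
    exact semiconjBy_aeval hd s
  · rw [aeval_algEquivCMulXAddC]
    exact semiconjBy_aeval hu s
  · rw [aeval_X, twistedCommutator, add_sub_cancel]

namespace AmbiskewRel

variable {φ : K[X] →ₐ[K] R}

theorem map_X (h : AmbiskewRel (algEquivCMulXAddC m γ) X l φ d u) :
    φ X = twistedCommutator l d u := by
  rw [twistedCommutator, h.d_mul_u, add_sub_cancel_left]

theorem isDownUpPair (h : AmbiskewRel (algEquivCMulXAddC m γ) X l φ d u) :
    IsDownUpPair (l + m) (-(l * m)) γ d u := by
  have hτ : φ (algEquivCMulXAddC m γ X) = m • twistedCommutator l d u + algebraMap K R γ := by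
    rw [algEquivCMulXAddC_X, map_add, map_smul, h.map_X, AlgHom.commutes]
  rw [isDownUpPair_iff_semiconjBy, ← hτ, ← h.map_X]
  exact ⟨h.u_mul X, h.d_mul X⟩

end AmbiskewRel

namespace NormalForm

variable (l m γ)

theorem isDownUpPair : IsDownUpPair (l + m) (-(l * m)) γ
    (mulD (algEquivCMulXAddC m γ) X l) (mulU (algEquivCMulXAddC m γ)) :=
  AmbiskewRel.isDownUpPair (R := Module.End K (NormalForm K[X])) (ambiskewRel _ X l)

theorem lsmul_X : Algebra.lsmul K K (NormalForm K[X]) (X : K[X]) =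
    twistedCommutator l (mulD (algEquivCMulXAddC m γ) X l) (mulU (algEquivCMulXAddC m γ)) :=
  AmbiskewRel.map_X (R := Module.End K (NormalForm K[X])) (ambiskewRel _ X l)

end NormalForm

end Ring

end DownUpPair

namespace DownUp

open Polynomial NormalForm

variable {K : Type} [Field K]

section UniversalProperty

variable (α β γ : K)

theorem isDownUpPair : IsDownUpPair α β γ (D K α β γ) (U K α β γ) where
  d_mul_u_mul_u := by
    simp only [D, U, ← map_mul, ← map_smul, ← map_add]
    exact RingQuot.mkAlgHom_rel K .rel1
  d_mul_d_mul_u := by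
    simp only [D, U, ← map_mul, ← map_smul, ← map_add]
    exact RingQuot.mkAlgHom_rel K .rel2

theorem adjoin_D_U : Algebra.adjoin K {D K α β γ, U K α β γ} = ⊤ := by
  have hrange : RingQuot.mkAlgHom K (DownUpRel K α β γ) '' Set.range (FreeAlgebra.ι K) =
      {D K α β γ, U K α β γ} := by
    ext x
    simp [Fin.exists_fin_two, D, U, eq_comm]
  rw [← hrange, ← AlgHom.map_adjoin, FreeAlgebra.adjoin_range_ι, Algebra.map_top,
    AlgHom.range_eq_top]
  exact RingQuot.mkAlgHom_surjective K _

variable {α β γ} {R : Type*} [Semiring R] [Algebra K R] {d u : R}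

/-- The homomorphism out of `A(α,β,γ)` given by its presentation. -/
def lift (h : IsDownUpPair α β γ d u) : DownUp K α β γ →ₐ[K] R :=
  RingQuot.liftAlgHom K ⟨FreeAlgebra.lift K ![d, u], by
    rintro _ _ (_ | _)
    · simpa using h.d_mul_u_mul_u
    · simpa using h.d_mul_d_mul_u⟩

theorem lift_D (h : IsDownUpPair α β γ d u) : lift h (D K α β γ) = d := by
  simp [lift, D]

theorem lift_U (h : IsDownUpPair α β γ d u) : lift h (U K α β γ) = u := by
  simp [lift, U]

end UniversalProperty

section NormalForm

variable (l m γ : K) [Invertible m]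

/-- The element `w = DU - λUD` of `A(λ + μ, -λμ, γ)`, where `λ = l` and `μ = m`. -/
abbrev W : DownUp K (l + m) (-(l * m)) γ := twistedCommutator l (D K _ _ _) (U K _ _ _)

theorem ambiskewRel_aeval_W : AmbiskewRel (algEquivCMulXAddC m γ) X l
    (aeval (W l m γ)) (D K _ _ _) (U K _ _ _) :=
  (isDownUpPair (l + m) (-(l * m)) γ).ambiskewRel

/-- The action of `A(λ + μ, -λμ, γ)` on normal forms, where `λ = l` and `μ = m`. -/
def normalRep : DownUp K (l + m) (-(l * m)) γ →ₐ[K] Module.End K (NormalForm K[X]) :=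
  lift (NormalForm.isDownUpPair l m γ)

theorem normalRep_W : normalRep l m γ (W l m γ) = Algebra.lsmul K K _ (X : K[X]) := by
  simp only [NormalForm.lsmul_X l m γ, W, twistedCommutator, normalRep, map_sub, map_smul,
    map_mul, lift_D, lift_U]

theorem normalRep_comp_aeval_W :
    (normalRep l m γ).comp (aeval (W l m γ)) = Algebra.lsmul K K _ :=
  algHom_ext <| by rw [AlgHom.comp_apply, aeval_X, normalRep_W]

variable {l m γ}

theorem eval_normalRep (f : DownUp K (l + m) (-(l * m)) γ) (x : NormalForm K[X]) :
    eval (aeval (W l m γ)) (D K _ _ _) (U K _ _ _) (normalRep l m γ f x) =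
      f * eval (aeval (W l m γ)) (D K _ _ _) (U K _ _ _) x := by
  have hf : f ∈ Algebra.adjoin K {D K (l + m) (-(l * m)) γ, U K _ _ _} :=
    adjoin_D_U (l + m) (-(l * m)) γ ▸ Algebra.mem_top
  have hrel := ambiskewRel_aeval_W l m γ
  induction hf using Algebra.adjoin_induction generalizing x with
  | mem f hf =>
    obtain rfl | rfl := hf
    · rw [normalRep, lift_D]
      exact LinearMap.congr_fun (eval_comp_mulD hrel) x
    · rw [normalRep, lift_U]
      exact LinearMap.congr_fun (eval_comp_mulU hrel) x
  | algebraMap c => simp [Algebra.algebraMap_eq_smul_one]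
  | add f g _ _ hf hg => rw [map_add, LinearMap.add_apply, map_add, hf, hg, add_mul]
  | mul f g _ _ hf hg => rw [map_mul, Module.End.mul_apply, hf, hg, mul_assoc]

/-- The coefficients of `f` in the normal monomials `U ^ i * D ^ k` over `K[DU - λUD]`. -/
def normalForm (f : DownUp K (l + m) (-(l * m)) γ) : NormalForm K[X] :=
  normalRep l m γ f (Finsupp.single (toLex (0, 0)) 1)

theorem eval_normalForm (f : DownUp K (l + m) (-(l * m)) γ) :
    eval (aeval (W l m γ)) (D K _ _ _) (U K _ _ _) (normalForm f) = f := by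
  rw [normalForm, eval_normalRep, eval_single, map_one, pow_zero, pow_zero, mul_one, mul_one,
    mul_one]

theorem normalForm_ne_zero {f : DownUp K (l + m) (-(l * m)) γ} (hf : f ≠ 0) : normalForm f ≠ 0 :=
  fun h ↦ hf <| by rw [← eval_normalForm f, h, map_zero]

theorem normalRep_eq_eval (f : DownUp K (l + m) (-(l * m)) γ) :
    normalRep l m γ f = eval (Algebra.lsmul K K _) (mulD (algEquivCMulXAddC m γ) X l)
      (mulU (algEquivCMulXAddC m γ)) (normalForm f) := by
  conv_lhs => rw [← eval_normalForm f]
  rw [map_eval, normalRep_comp_aeval_W, normalRep, lift_D, lift_U]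

theorem leadExp_normalForm_mul (hl : l ≠ 0) (f g : DownUp K (l + m) (-(l * m)) γ) :
    leadExp (normalForm (f * g)) = leadExp (normalForm f) + leadExp (normalForm g) := by
  have hmul : normalForm (f * g) = normalRep l m γ f (normalForm g) := by
    rw [normalForm, map_mul, Module.End.mul_apply, normalForm]
  rw [hmul, normalRep_eq_eval]
  exact shiftsLeadExp_eval (IsSMulRegular.of_ne_zero hl) (normalForm f) (normalForm g)

theorem mem_adjoin_iff (f : DownUp K (l + m) (-(l * m)) γ) :
    f ∈ Algebra.adjoin K {U K _ _ _, W l m γ} ↔ normalForm f ∈ dFree K K[X] := by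
  constructor <;> intro hf
  · suffices ∀ x ∈ dFree K K[X], normalRep l m γ f x ∈ dFree K K[X] from
      this _ (single_mem_dFree 0 1)
    induction hf using Algebra.adjoin_induction with
    | mem f hf =>
      obtain rfl | rfl := hf
      · rw [normalRep, lift_U]
        exact dFree_le_comap_mulU _
      · rw [normalRep_W]
        exact dFree_le_comap_lsmul X
    | algebraMap c =>
      intro x hx
      rw [AlgHom.commutes, Module.algebraMap_end_apply]
      exact Submodule.smul_mem _ c hx
    | add f g _ _ hf hg =>
      intro x hx
      rw [map_add]
      exact add_mem (hf x hx) (hg x hx)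
    | mul f g _ _ hf hg =>
      intro x hx
      rw [map_mul]
      exact hf _ (hg x hx)
  · rw [← eval_normalForm f]
    refine dFree_le_comap_eval (fun p ↦ ?_) (Algebra.subset_adjoin (.inl rfl)) hf
    exact Algebra.adjoin_mono (Set.subset_insert _ _) (aeval_mem_adjoin_singleton K _)

theorem mem_adjoin_of_mul_mem (hl : l ≠ 0) {f g : DownUp K (l + m) (-(l * m)) γ} (hf : f ≠ 0)
    (hg : g ≠ 0) (hfg : f * g ∈ Algebra.adjoin K {U K _ _ _, W l m γ}) :
    f ∈ Algebra.adjoin K {U K _ _ _, W l m γ} ∧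
      g ∈ Algebra.adjoin K {U K _ _ _, W l m γ} := by
  obtain ⟨a, ha⟩ := WithBot.ne_bot_iff_exists.1 (leadExp_eq_bot.not.2 (normalForm_ne_zero hf))
  obtain ⟨b, hb⟩ := WithBot.ne_bot_iff_exists.1 (leadExp_eq_bot.not.2 (normalForm_ne_zero hg))
  have hab : leadExp (normalForm (f * g)) = ((a + b : ℕ ×ₗ ℕ) : WithBot (ℕ ×ₗ ℕ)) := by
    rw [leadExp_normalForm_mul hl, ← ha, ← hb, WithBot.coe_add]
  rw [mem_adjoin_iff, mem_dFree_iff_of_leadExp_eq hab] at hfg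
  rw [mem_adjoin_iff, mem_adjoin_iff, mem_dFree_iff_of_leadExp_eq ha.symm,
    mem_dFree_iff_of_leadExp_eq hb.symm]
  exact Nat.add_eq_zero_iff.1 hfg

end NormalForm

end DownUp

theorem downUp_tilde_subalgebra_factor_closed_general
    (K : Type) [Field K] (α β γ lam μ : K) (hβ : β ≠ 0) (hsum : lam + μ = α)
    (hprod : lam * μ = -β) (f g : DownUp K α β γ) (hf : f ≠ 0) (hg : g ≠ 0)
    (hfg : f * g ∈ Algebra.adjoin K
      {DownUp.U K α β γ, DownUp.D K α β γ * DownUp.U K α β γ -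
        lam • (DownUp.U K α β γ * DownUp.D K α β γ)}) :
    f ∈ Algebra.adjoin K
      {DownUp.U K α β γ, DownUp.D K α β γ * DownUp.U K α β γ -
        lam • (DownUp.U K α β γ * DownUp.D K α β γ)} ∧
    g ∈ Algebra.adjoin K
      {DownUp.U K α β γ, DownUp.D K α β γ * DownUp.U K α β γ -
        lam • (DownUp.U K α β γ * DownUp.D K α β γ)} := by
  obtain rfl : β = -(lam * μ) := by rw [hprod, neg_neg]
  subst hsum
  obtain ⟨hlam, hμ⟩ := mul_ne_zero_iff.1 (neg_ne_zero.1 hβ)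
  have := invertibleOfNonzero hμ
  exact DownUp.mem_adjoin_of_mul_mem hlam hf hg hfg

/-- For `β ≠ 0`, `λ, μ` the roots of `t² − αt − β`, and `Ã'` the subalgebra
of `A = A(α,β,1)` generated by `U` and `DU − λUD`: if `f, g ∈ A` are nonzero and `fg ∈ Ã'`,
then `f ∈ Ã'` and `g ∈ Ã'`. -/
theorem downUp_tilde_subalgebra_factor_closed
    (K : Type) [Field K] [CharZero K] (α β lam μ : K) (hβ : β ≠ 0)
    (hsum : lam + μ = α) (hprod : lam * μ = -β)
    (f g : DownUp K α β 1) (hf : f ≠ 0) (hg : g ≠ 0)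
    (hfg : f * g ∈ Algebra.adjoin K
        ({DownUp.U K α β 1,
          DownUp.D K α β 1 * DownUp.U K α β 1 -
            lam • (DownUp.U K α β 1 * DownUp.D K α β 1)} : Set (DownUp K α β 1))) :
    f ∈ Algebra.adjoin K
        ({DownUp.U K α β 1,
          DownUp.D K α β 1 * DownUp.U K α β 1 -
            lam • (DownUp.U K α β 1 * DownUp.D K α β 1)} : Set (DownUp K α β 1)) ∧
    g ∈ Algebra.adjoin K
        ({DownUp.U K α β 1,
          DownUp.D K α β 1 * DownUp.U K α β 1 -
            lam • (DownUp.U K α β 1 * DownUp.D K α β 1)} : Set (DownUp K α β 1)) := by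
  exact downUp_tilde_subalgebra_factor_closed_general K α β 1 lam μ hβ hsum hprod f g hf hg hfg
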